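/- arXiv:1711.01064 — 2 statements merged into one kernel-verified Lean document; each statement's English description precedes it below -/
import Mathlib

section
/- Suppose x̄_N = M. Then, setting w_M = a⁻²z_N⁻², the following recursion holds: F̄_{M,N}(z_1,…,z_N|w_1,…,w_{M−1},a⁻²z_N⁻²|x̄_1,…,x̄_N) = (a²−a⁻²)(baz_N−b⁻¹a⁻¹z_N⁻¹) ∏_{j=1}^{N}(az_j−a⁻³z_j⁻¹z_N⁻²) ∏_{j=1}^{N−1}(az_j⁻¹−a⁻³z_j z_N⁻²) ∏_{j=1}^{M−1}(az_N⁻¹−a⁻¹z_N w_j)(az_N⁻¹w_j−a⁻¹z_N) × F̄_{M−1,N−1}(z_1,…,z_{N−1}|w_1,…,w_{M−1}|x̄_1,…,x̄_{N−1}). -/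
open Finset

def eps {N : ℕ} (τ : Fin N → Bool) (j : Fin N) : ℤ := if τ j then 1 else -1

noncomputable def pairFactor (a Z1 Z2 : ℂ) (t1 t2 : ℤ) : ℂ :=
  ((a ^ (2:ℤ) * Z1 ^ t1 * Z2 ^ t2 - a ^ (-2:ℤ) * Z1 ^ (-t1) * Z2 ^ (-t2)) *
   (a ^ (2:ℤ) * Z1 ^ (-t1) * Z2 ^ t2 - a ^ (-2:ℤ) * Z1 ^ t1 * Z2 ^ (-t2))) /
  ((Z1 ^ t1 * Z2 ^ t2 - Z1 ^ (-t1) * Z2 ^ (-t2)) *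
   (Z1 ^ (-t1) * Z2 ^ t2 - Z1 ^ t1 * Z2 ^ (-t2)))

/-- The symmetric function `F_{M,N}(z_1,…,z_N|w_1,…,w_M|x_1,…,x_N)`,
where `x k` for `k = 0,…,N-1` encodes `x_{k+1}`. -/
noncomputable def FF (a b : ℂ) (M N : ℕ) (z : Fin N → ℂ) (w : Fin M → ℂ) (x : ℕ → ℕ) : ℂ :=
  (a ^ (2:ℤ) - a ^ (-2:ℤ)) ^ N *
  (∏ j, (-(a ^ (2:ℤ) * z j ^ (2:ℤ)) + a ^ (-2:ℤ) * z j ^ (-2:ℤ))) *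
  ∑ σ : Equiv.Perm (Fin N), ∑ τ : Fin N → Bool,
    (∏ j, (z j ^ (2 * eps τ j) - z j ^ (-(2 * eps τ j)))⁻¹) *
    (∏ p ∈ Finset.univ.filter (fun p : Fin N × Fin N => p.1 < p.2),
      pairFactor a (z (σ p.1)) (z (σ p.2)) (eps τ (σ p.1)) (eps τ (σ p.2))) *
    (∏ k, (b * a⁻¹ * z (σ k) ^ (-(eps τ (σ k))) - b⁻¹ * a * z (σ k) ^ (eps τ (σ k)))) *
    (∏ k, ∏ j : Fin M, (a * z (σ k) ^ (-(eps τ (σ k))) - a⁻¹ * z (σ k) ^ (eps τ (σ k)) * w j)) *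
    (∏ k : Fin N, ∏ j ∈ Finset.univ.filter (fun j : Fin M => (j : ℕ) + 1 < x k.val),
      (a * z (σ k) ^ (-(eps τ (σ k))) * w j - a⁻¹ * z (σ k) ^ (eps τ (σ k)))) *
    (∏ k : Fin N, ∏ j ∈ Finset.univ.filter (fun j : Fin M => x k.val ≤ (j : ℕ)),
      (a * z (σ k) ^ (eps τ (σ k)) - a⁻¹ * z (σ k) ^ (-(eps τ (σ k))) * w j))

/-- The dual symmetric function `F̄_{M,N}(z_1,…,z_N|w_1,…,w_M|x̄_1,…,x̄_N)`. -/
noncomputable def FBar (a b : ℂ) (M N : ℕ) (z : Fin N → ℂ) (w : Fin M → ℂ) (x : ℕ → ℕ) : ℂ :=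
  (a ^ (2:ℤ) - a ^ (-2:ℤ)) ^ N *
  (∏ j, (-(a ^ (2:ℤ) * z j ^ (2:ℤ)) + a ^ (-2:ℤ) * z j ^ (-2:ℤ))) *
  ∑ σ : Equiv.Perm (Fin N), ∑ τ : Fin N → Bool,
    (∏ j, (z j ^ (2 * eps τ j) - z j ^ (-(2 * eps τ j)))⁻¹) *
    (∏ p ∈ Finset.univ.filter (fun p : Fin N × Fin N => p.1 < p.2),
      pairFactor a (z (σ p.1)) (z (σ p.2)) (eps τ (σ p.1)) (eps τ (σ p.2))) *
    (∏ k, (b * a * z (σ k) ^ (eps τ (σ k)) - b⁻¹ * a⁻¹ * z (σ k) ^ (-(eps τ (σ k))))) *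
    (∏ k, ∏ j : Fin M, (a * z (σ k) ^ (-(eps τ (σ k))) * w j - a⁻¹ * z (σ k) ^ (eps τ (σ k)))) *
    (∏ k : Fin N, ∏ j ∈ Finset.univ.filter (fun j : Fin M => (j : ℕ) + 1 < x k.val),
      (a * z (σ k) ^ (-(eps τ (σ k))) - a⁻¹ * z (σ k) ^ (eps τ (σ k)) * w j)) *
    (∏ k : Fin N, ∏ j ∈ Finset.univ.filter (fun j : Fin M => x k.val ≤ (j : ℕ)),
      (a * z (σ k) ^ (eps τ (σ k)) * w j - a⁻¹ * z (σ k) ^ (-(eps τ (σ k)))))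

/-- `xfun T k` is the `(k+1)`-st smallest element of `T`, in 1-based labelling. -/
def xfun {M : ℕ} (T : Finset (Fin M)) (k : ℕ) : ℕ :=
  ((T.sort (· ≤ ·)).map (fun j : Fin M => (j : ℕ) + 1)).getD k 0

/-!
In the signed variables `u_k = z_{σ(k)}^{τ_{σ(k)}}` a summand of `F̄` is a product of one-particle
weights and two-particle scattering factors. At `w_M = a⁻²z_N⁻²` the one-particle weight vanishes
at `z_N⁻¹`, and also at `z_N` for a particle located to the left of site `M`; only the last particle
sits on site `M`, so only the terms with `σ(N) = N` and `τ_N = 1` survive. In these, each other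
particle contributes through `u_k` and `z_N` a factor that is invariant under `u_k ↦ u_k⁻¹`, hence
does not depend on `(σ, τ)` in total and comes out of the sum; the remaining sum is the one for
`F̄_{M-1,N-1}`.
-/

section Reindexing

variable {N : ℕ}

theorem prod_fst_lt_snd_eq_prod_Iio {R ι : Type*} [CommMonoid R] [Fintype ι] [Preorder ι]
    [DecidableLT ι] [LocallyFiniteOrderBot ι] (f : ι → ι → R) :
    ∏ p : ι × ι with p.1 < p.2, f p.1 p.2 = ∏ k, ∏ i ∈ Iio k, f i k :=
  prod_finset_product_right' _ univ Iio (by simp)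

theorem sum_eq_sum_snoc {R β : Type*} [AddCommMonoid R] [Fintype β] (c : β)
    (f : (Fin (N + 1) → β) → R) (hf : ∀ τ, τ (Fin.last N) ≠ c → f τ = 0) :
    ∑ τ, f τ = ∑ τ : Fin N → β, f (Fin.snoc τ c) := by
  refine (Fintype.sum_of_injective _ (Fin.snoc_left_injective (α := fun _ => β) c) _ _ ?_
    fun _ => rfl).symm
  intro τ hτ
  refine hf τ fun hlast => hτ ⟨Fin.init τ, ?_⟩
  rw [← hlast]
  exact Fin.snoc_init_self τ

/-- The permutation of `Fin (N + 1)` that extends `π` by fixing `Fin.last N`. -/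
def extendLast (π : Equiv.Perm (Fin N)) : Equiv.Perm (Fin (N + 1)) :=
  finSuccEquivLast.symm.permCongr π.optionCongr

@[simp]
theorem extendLast_last (π : Equiv.Perm (Fin N)) : extendLast π (Fin.last N) = Fin.last N := by
  simp [extendLast]

@[simp]
theorem extendLast_castSucc (π : Equiv.Perm (Fin N)) (k : Fin N) :
    extendLast π k.castSucc = (π k).castSucc := by
  simp [extendLast]

theorem extendLast_injective : Function.Injective (extendLast (N := N)) :=
  finSuccEquivLast.symm.permCongr.injective.comp Equiv.optionCongr_injective

theorem exists_extendLast_eq {σ : Equiv.Perm (Fin (N + 1))} (hσ : σ (Fin.last N) = Fin.last N) :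
    ∃ π, extendLast π = σ := by
  have hnone : finSuccEquivLast.permCongr σ none = none := by simp [hσ]
  refine ⟨Equiv.removeNone (finSuccEquivLast.permCongr σ), ?_⟩
  rw [extendLast, map_equiv_removeNone, hnone, Equiv.swap_self, ← Equiv.Perm.one_def, one_mul]
  exact finSuccEquivLast.permCongr.symm_apply_apply σ

theorem sum_perm_eq_sum_extendLast {R : Type*} [AddCommMonoid R]
    (f : Equiv.Perm (Fin (N + 1)) → R) (hf : ∀ σ, σ (Fin.last N) ≠ Fin.last N → f σ = 0) :
    ∑ σ, f σ = ∑ π : Equiv.Perm (Fin N), f (extendLast π) :=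
  (Fintype.sum_of_injective _ extendLast_injective _ _
    (fun σ hσ => hf σ fun hlast => hσ (exists_extendLast_eq hlast)) fun _ => rfl).symm

end Reindexing

section LocalWeights

variable {K : Type*} [Field K]

/-- The bracket `[x] = x - x⁻¹`. The prefactors and two-particle factors of `F̄` are products and
quotients of brackets of monomials in `a` and the `z_j`. -/
def bracket (x : K) : K := x - x⁻¹

/-- The two-particle factor `[a²uv] [a²v/u] / ([uv] [v/u])`: this is `pairFactor` in the signed
variables `u = Z1 ^ t1` and `v = Z2 ^ t2`. -/
def scatteringFactor (a u v : K) : K :=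
  bracket (a ^ 2 * u * v) * bracket (a ^ 2 * u⁻¹ * v) / (bracket (u * v) * bracket (u⁻¹ * v))

/-- The interaction `a u w - a⁻¹ u⁻¹` of a particle with signed variable `u` and a site with
parameter `w`. -/
def siteWeight (a u w : K) : K := a * u * w - a⁻¹ * u⁻¹

/-- All factors by which a particle with signed variable `u` influences a site with parameter `w`
to its right and a particle with signed variable `v` placed on that site. -/
def spectatorFactor (a v w u : K) : K :=
  scatteringFactor a u v * (siteWeight a u⁻¹ w * siteWeight a u w)

theorem bracket_ne_zero {x : K} (hx : x ≠ 0) (hx2 : x ^ 2 ≠ 1) : bracket x ≠ 0 := by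
  rw [bracket, sub_ne_zero, ne_eq, ← mul_eq_one_iff_eq_inv₀ hx, ← sq]
  exact hx2

theorem spectatorFactor_inv (a v w u : K) :
    spectatorFactor a v w u⁻¹ = spectatorFactor a v w u := by
  simp only [spectatorFactor, scatteringFactor, inv_inv]
  ring

variable {a v : K}

theorem siteWeight_eq_bracket (ha : a ≠ 0) (hv : v ≠ 0) (u : K) :
    siteWeight a u (a ^ (-2 : ℤ) * v ^ (-2 : ℤ)) = -((a * v)⁻¹ * bracket (u⁻¹ * v)) := by
  simp only [siteWeight, bracket, zpow_neg, zpow_ofNat, mul_inv, inv_inv]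
  field_simp
  ring

theorem inv_mul_bracket (ha : a ≠ 0) (hv : v ≠ 0) (u : K) :
    (a * v)⁻¹ * bracket (a ^ 2 * u * v) = a * u - a ^ (-3 : ℤ) * u⁻¹ * v ^ (-2 : ℤ) := by
  simp only [bracket, zpow_neg, zpow_ofNat, mul_inv]
  field_simp

theorem siteWeight_self_eq_zero (ha : a ≠ 0) (hv : v ≠ 0) :
    siteWeight a v (a ^ (-2 : ℤ) * v ^ (-2 : ℤ)) = 0 := by
  rw [siteWeight_eq_bracket ha hv, inv_mul_cancel₀ hv]
  simp [bracket]

theorem spectatorFactor_eq (ha : a ≠ 0) (hv : v ≠ 0) {u : K} (hu : u ≠ 0)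
    (huv : u ^ 2 * v ^ 2 ≠ 1) (huv' : u ^ 2 ≠ v ^ 2) :
    spectatorFactor a v (a ^ (-2 : ℤ) * v ^ (-2 : ℤ)) u =
      (a * u - a ^ (-3 : ℤ) * u⁻¹ * v ^ (-2 : ℤ)) *
        (a * u⁻¹ - a ^ (-3 : ℤ) * u * v ^ (-2 : ℤ)) := by
  have hmul : bracket (u * v) ≠ 0 := bracket_ne_zero (mul_ne_zero hu hv) (by rwa [mul_pow])
  have hdiv : bracket (u⁻¹ * v) ≠ 0 := by
    refine bracket_ne_zero (mul_ne_zero (inv_ne_zero hu) hv) ?_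
    rw [mul_pow, inv_pow, ne_eq, inv_mul_eq_one₀ (pow_ne_zero 2 hu)]
    exact huv'
  have hfst := inv_mul_bracket ha hv u
  have hsnd := inv_mul_bracket ha hv u⁻¹
  rw [inv_inv] at hsnd
  rw [spectatorFactor, scatteringFactor, siteWeight_eq_bracket ha hv, siteWeight_eq_bracket ha hv,
    inv_inv, ← hfst, ← hsnd, div_mul_eq_mul_div, div_eq_iff (mul_ne_zero hmul hdiv)]
  ring

theorem neg_bracket_mul_siteWeight_inv (ha : a ≠ 0) (hv : v ≠ 0) (hv4 : v ^ 4 ≠ 1) :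
    -bracket (a ^ 2 * v ^ 2) * (bracket (v ^ 2))⁻¹ *
        siteWeight a v⁻¹ (a ^ (-2 : ℤ) * v ^ (-2 : ℤ)) =
      a * v - a ^ (-3 : ℤ) * v⁻¹ * v ^ (-2 : ℤ) := by
  have hsq : bracket (v ^ 2) ≠ 0 := bracket_ne_zero (pow_ne_zero 2 hv) (by rwa [← pow_mul])
  rw [siteWeight_eq_bracket ha hv, inv_inv, ← inv_mul_bracket ha hv, mul_assoc (a ^ 2), ← sq]
  field_simp

end LocalWeights

section BetheWeight

variable {K : Type*} [Field K] {M N : ℕ}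

/-- The weight of a particle with signed variable `u` at position `x` (counted from `1`) among `M`
sites. The boundary weight `κ` is arbitrary; `F̄` has `κ u = b a u - b⁻¹ a⁻¹ u⁻¹`. -/
def oneParticleWeight (κ : K → K) (a : K) (w : Fin M → K) (x : ℕ) (u : K) : K :=
  κ u * (∏ j, siteWeight a u⁻¹ (w j)) *
    (∏ j ∈ {j : Fin M | (j : ℕ) + 1 < x}, (a * u⁻¹ - a⁻¹ * u * w j)) *
    ∏ j ∈ {j : Fin M | x ≤ (j : ℕ)}, siteWeight a u (w j)

/-- The summand of `F̄` as a function of the signed variables `u_k = z_{σ(k)}^{τ_{σ(k)}}`. -/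
def betheWeight (κ : K → K) (a : K) (w : Fin M → K) (x : Fin N → ℕ) (u : Fin N → K) : K :=
  (∏ k, (bracket (u k ^ 2))⁻¹) * (∏ k, ∏ i ∈ Iio k, scatteringFactor a (u i) (u k)) *
    ∏ k, oneParticleWeight κ a w (x k) (u k)

variable {κ : K → K} {a : K}

theorem oneParticleWeight_inv_eq_zero {w : Fin M → K} {x : ℕ} {u : K} {j : Fin M}
    (hj : siteWeight a u (w j) = 0) : oneParticleWeight κ a w x u⁻¹ = 0 := by
  have hprod : ∏ j, siteWeight a u (w j) = 0 := prod_eq_zero (mem_univ j) hj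
  simp [oneParticleWeight, hprod]

theorem oneParticleWeight_eq_zero {w : Fin M → K} {x : ℕ} {u : K} {j : Fin M} (hx : x ≤ j)
    (hj : siteWeight a u (w j) = 0) : oneParticleWeight κ a w x u = 0 := by
  have hprod : ∏ j ∈ {j : Fin M | x ≤ (j : ℕ)}, siteWeight a u (w j) = 0 :=
    prod_eq_zero (by simpa using hx) hj
  simp [oneParticleWeight, hprod]

theorem betheWeight_eq_zero {w : Fin M → K} {x : Fin N → ℕ} {u : Fin N → K} (k : Fin N)
    (hk : oneParticleWeight κ a w (x k) (u k) = 0) : betheWeight κ a w x u = 0 := by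
  have hprod : ∏ k, oneParticleWeight κ a w (x k) (u k) = 0 := prod_eq_zero (mem_univ k) hk
  rw [betheWeight, hprod, mul_zero]

theorem oneParticleWeight_of_le (w : Fin (M + 1) → K) {x : ℕ} (hx : x ≤ M) (u : K) :
    oneParticleWeight κ a w x u = oneParticleWeight κ a (Fin.init w) x u *
      (siteWeight a u⁻¹ (w (Fin.last M)) * siteWeight a u (w (Fin.last M))) := by
  simp only [oneParticleWeight, prod_filter, Fin.prod_univ_castSucc, Fin.init, Fin.val_castSucc,
    Fin.val_last, hx, if_true, if_neg (show ¬M + 1 < x by omega)]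
  ring

theorem oneParticleWeight_last (w : Fin (M + 1) → K) (u : K) :
    oneParticleWeight κ a w (M + 1) u = κ u * siteWeight a u⁻¹ (w (Fin.last M)) *
      ∏ j : Fin M, ((a * u⁻¹ - a⁻¹ * u * Fin.init w j) * siteWeight a u⁻¹ (Fin.init w j)) := by
  have hright (j : Fin M) : ¬M + 1 ≤ (j : ℕ) := by omega
  simp only [oneParticleWeight, prod_filter, Fin.prod_univ_castSucc, Fin.val_castSucc,
    Fin.val_last, add_lt_add_iff_right, Fin.is_lt, lt_irrefl, hright, Nat.not_succ_le_self,
    Fin.init, if_true, if_false, prod_const_one, prod_mul_distrib]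
  ring

theorem betheWeight_snoc (w : Fin (M + 1) → K) {x : Fin (N + 1) → ℕ}
    (hx : ∀ k : Fin N, x k.castSucc ≤ M) (hlast : x (Fin.last N) = M + 1)
    (u : Fin N → K) (v : K) :
    betheWeight κ a w x (Fin.snoc u v) =
      (bracket (v ^ 2))⁻¹ * oneParticleWeight κ a w (M + 1) v *
        (∏ k, spectatorFactor a v (w (Fin.last M)) (u k)) *
        betheWeight κ a (Fin.init w) (Fin.init x) u := by
  have hIio (f : Fin (N + 1) → K) : ∏ i ∈ Iio (Fin.last N), f i = ∏ i : Fin N, f i.castSucc := by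
    simp [Fin.Iio_last_eq_map]
  simp only [betheWeight, spectatorFactor, Fin.prod_univ_castSucc, Fin.prod_Iio_castSucc, hIio,
    Fin.snoc_castSucc, Fin.snoc_last, Fin.init, hlast, oneParticleWeight_of_le w (hx _),
    prod_mul_distrib]
  ring

end BetheWeight

section SignedVariables

variable {K : Type*} [Field K] {N : ℕ}

/-- The signed variables `u_k = z_{σ(k)}^{τ_{σ(k)}}`. -/
def signedVariables (z : Fin N → K) (σ : Equiv.Perm (Fin N)) (τ : Fin N → Bool) : Fin N → K :=
  fun k => z (σ k) ^ eps τ (σ k)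

theorem signedVariables_eq_self_or_inv (z : Fin N → K) (σ : Equiv.Perm (Fin N))
    (τ : Fin N → Bool) (k : Fin N) :
    signedVariables z σ τ k = if τ (σ k) then z (σ k) else (z (σ k))⁻¹ := by
  cases h : τ (σ k) <;> simp [signedVariables, eps, h]

theorem prod_signedVariables {f : K → K} (hf : ∀ u, f u⁻¹ = f u) (z : Fin N → K)
    (σ : Equiv.Perm (Fin N)) (τ : Fin N → Bool) :
    ∏ k, f (signedVariables z σ τ k) = ∏ j, f (z j) := by
  rw [← Equiv.prod_comp σ fun j => f (z j)]
  refine prod_congr rfl fun k _ => ?_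
  rw [signedVariables_eq_self_or_inv]
  split_ifs
  exacts [rfl, hf _]

theorem signedVariables_extendLast_snoc (z : Fin (N + 1) → K) (π : Equiv.Perm (Fin N))
    (τ : Fin N → Bool) :
    signedVariables z (extendLast π) (Fin.snoc τ true) =
      Fin.snoc (signedVariables (Fin.init z) π τ) (z (Fin.last N)) := by
  ext k
  refine Fin.lastCases ?_ (fun k => ?_) k <;> simp [signedVariables, eps, Fin.init]

end SignedVariables

section DualWavefunction

variable {K : Type*} [Field K] {M N : ℕ}

/-- The function `F̄_{M,N}` over a field, with an arbitrary boundary weight `κ`. -/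
def dualWavefunction (κ : K → K) (a : K) (z : Fin N → K) (w : Fin M → K) (x : Fin N → ℕ) : K :=
  bracket (a ^ 2) ^ N * (∏ j, -bracket (a ^ 2 * z j ^ 2)) *
    ∑ σ : Equiv.Perm (Fin N), ∑ τ : Fin N → Bool, betheWeight κ a w x (signedVariables z σ τ)

theorem pairFactor_eq_scatteringFactor (a Z₁ Z₂ : ℂ) (t₁ t₂ : ℤ) :
    pairFactor a Z₁ Z₂ t₁ t₂ = scatteringFactor a (Z₁ ^ t₁) (Z₂ ^ t₂) := by
  simp only [pairFactor, scatteringFactor, bracket, zpow_neg, zpow_ofNat, mul_inv, inv_inv]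

theorem FBar_eq_dualWavefunction (a b : ℂ) (z : Fin N → ℂ) (w : Fin M → ℂ) (x : ℕ → ℕ) :
    FBar a b M N z w x =
      dualWavefunction (fun u => b * a * u - b⁻¹ * a⁻¹ * u⁻¹) a z w fun k => x k := by
  rw [FBar, dualWavefunction]
  congr 1
  · simp only [bracket, zpow_neg, zpow_ofNat, mul_inv, neg_sub', neg_add_eq_sub, sub_neg_eq_add]
  refine sum_congr rfl fun σ _ => sum_congr rfl fun τ _ => ?_
  rw [← Equiv.prod_comp σ fun j => (z j ^ (2 * eps τ j) - z j ^ (-(2 * eps τ j)))⁻¹,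
    prod_fst_lt_snd_eq_prod_Iio fun i k =>
      pairFactor a (z (σ i)) (z (σ k)) (eps τ (σ i)) (eps τ (σ k))]
  simp only [pairFactor_eq_scatteringFactor, betheWeight, oneParticleWeight, siteWeight, bracket,
    signedVariables, prod_mul_distrib, zpow_neg, zpow_ofNat, inv_inv, mul_comm (2 : ℤ), zpow_mul]
  ring

variable {κ : K → K} {a : K} {z : Fin (N + 1) → K} {w : Fin (M + 1) → K} {x : Fin (N + 1) → ℕ}

theorem betheWeight_signedVariables_eq_zero
    (hw : siteWeight a (z (Fin.last N)) (w (Fin.last M)) = 0)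
    (hx : ∀ k : Fin N, x k.castSucc ≤ M) {σ : Equiv.Perm (Fin (N + 1))} {τ : Fin (N + 1) → Bool}
    (hστ : σ (Fin.last N) ≠ Fin.last N ∨ τ (Fin.last N) ≠ true) :
    betheWeight κ a w x (signedVariables z σ τ) = 0 := by
  apply betheWeight_eq_zero (σ.symm (Fin.last N))
  rw [signedVariables_eq_self_or_inv, Equiv.apply_symm_apply]
  split_ifs with hτ
  · have hσ : σ.symm (Fin.last N) ≠ Fin.last N := fun h =>
      hστ.elim (· (σ.symm_apply_eq.mp h).symm) (· hτ)
    obtain ⟨k, hk⟩ := Fin.exists_castSucc_eq.mpr hσ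
    exact oneParticleWeight_eq_zero (hk ▸ hx k) hw
  · exact oneParticleWeight_inv_eq_zero hw

theorem sum_betheWeight_eq_sum_snoc (hw : siteWeight a (z (Fin.last N)) (w (Fin.last M)) = 0)
    (hx : ∀ k : Fin N, x k.castSucc ≤ M) :
    ∑ σ, ∑ τ, betheWeight κ a w x (signedVariables z σ τ) =
      ∑ π, ∑ τ, betheWeight κ a w x
        (Fin.snoc (signedVariables (Fin.init z) π τ) (z (Fin.last N))) := by
  rw [sum_perm_eq_sum_extendLast _ fun σ hσ =>
    sum_eq_zero fun τ _ => betheWeight_signedVariables_eq_zero hw hx (.inl hσ)]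
  refine sum_congr rfl fun π _ => ?_
  rw [sum_eq_sum_snoc true _ fun τ hτ => betheWeight_signedVariables_eq_zero hw hx (.inr hτ)]
  simp only [signedVariables_extendLast_snoc]

theorem dualWavefunction_succ_of_siteWeight_eq_zero
    (hw : siteWeight a (z (Fin.last N)) (w (Fin.last M)) = 0)
    (hx : ∀ k : Fin N, x k.castSucc ≤ M) (hlast : x (Fin.last N) = M + 1) :
    dualWavefunction κ a z w x =
      bracket (a ^ 2) * (-bracket (a ^ 2 * z (Fin.last N) ^ 2) * (bracket (z (Fin.last N) ^ 2))⁻¹ *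
        oneParticleWeight κ a w (M + 1) (z (Fin.last N))) *
        (∏ j : Fin N, spectatorFactor a (z (Fin.last N)) (w (Fin.last M)) (z j.castSucc)) *
        dualWavefunction κ a (Fin.init z) (Fin.init w) (Fin.init x) := by
  rw [dualWavefunction, sum_betheWeight_eq_sum_snoc hw hx]
  simp only [betheWeight_snoc w hx hlast, prod_signedVariables (spectatorFactor_inv a _ _),
    ← mul_sum]
  simp only [dualWavefunction, Fin.prod_univ_castSucc, pow_succ, Fin.init]
  ring

theorem FBar_recursion_top_general (ha : a ≠ 0) (hz : ∀ j, z j ≠ 0) (hz4 : ∀ j, z j ^ 4 ≠ 1)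
    (hzz : ∀ j k, j ≠ k → z j ^ 2 * z k ^ 2 ≠ 1) (hzz' : ∀ j k, j ≠ k → z j ^ 2 ≠ z k ^ 2)
    (hx : ∀ k : Fin N, x k.castSucc ≤ M) (hlast : x (Fin.last N) = M + 1) :
    dualWavefunction κ a z
        (Function.update w (Fin.last M) (a ^ (-2 : ℤ) * z (Fin.last N) ^ (-2 : ℤ))) x =
      (a ^ (2 : ℤ) - a ^ (-2 : ℤ)) * κ (z (Fin.last N)) *
      (∏ j : Fin (N + 1), (a * z j - a ^ (-3 : ℤ) * (z j)⁻¹ * z (Fin.last N) ^ (-2 : ℤ))) *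
      (∏ j : Fin N,
        (a * (z j.castSucc)⁻¹ - a ^ (-3 : ℤ) * z j.castSucc * z (Fin.last N) ^ (-2 : ℤ))) *
      (∏ j : Fin M,
        ((a * (z (Fin.last N))⁻¹ - a⁻¹ * z (Fin.last N) * w j.castSucc) *
         (a * (z (Fin.last N))⁻¹ * w j.castSucc - a⁻¹ * z (Fin.last N)))) *
      dualWavefunction κ a (Fin.init z) (Fin.init w) (Fin.init x) := by
  have hzero := siteWeight_self_eq_zero ha (hz (Fin.last N))
  have hspectator (j : Fin N) := spectatorFactor_eq ha (hz (Fin.last N)) (hz j.castSucc)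
    (hzz _ _ j.castSucc_lt_last.ne) (hzz' _ _ j.castSucc_lt_last.ne)
  have hbracket : bracket (a ^ 2) = a ^ (2 : ℤ) - a ^ (-2 : ℤ) := by
    simp only [bracket, zpow_neg, zpow_ofNat]
  rw [dualWavefunction_succ_of_siteWeight_eq_zero (by rwa [Function.update_self]) hx hlast,
    oneParticleWeight_last, Function.update_self, Fin.init_update_last, Fin.prod_univ_castSucc,
    ← neg_bracket_mul_siteWeight_inv ha (hz _) (hz4 _), ← hbracket]
  simp only [hspectator, prod_mul_distrib, siteWeight, inv_inv, Fin.init]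
  ring

end DualWavefunction

/-- Property (4), first case, for the dual `F̄`: when `x̄_N = M` (sizes
re-parametrized as `M+1` sites and `N+1` particles), setting `w_M = a⁻²z_N⁻²`
yields the recursion to `F̄_{M-1,N-1}`. -/
theorem FBar_recursion_top (a b : ℂ) (M N : ℕ)
    (z : Fin (N + 1) → ℂ) (w : Fin (M + 1) → ℂ) (x : ℕ → ℕ)
    (ha : a ≠ 0) (hb : b ≠ 0) (hz : ∀ j, z j ≠ 0) (hz4 : ∀ j, z j ^ 4 ≠ 1)
    (hzz : ∀ j k, j ≠ k → z j ^ 2 * z k ^ 2 ≠ 1)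
    (hzz' : ∀ j k, j ≠ k → z j ^ 2 ≠ z k ^ 2)
    (hx1 : ∀ k : Fin (N + 1), 1 ≤ x k.val) (hxM : ∀ k : Fin (N + 1), x k.val ≤ M + 1)
    (hmono : ∀ j k : Fin (N + 1), j < k → x j.val < x k.val)
    (hlast : x N = M + 1) :
    FBar a b (M + 1) (N + 1) z
      (Function.update w (Fin.last M) (a ^ (-2:ℤ) * z (Fin.last N) ^ (-2:ℤ))) x
    = (a ^ (2:ℤ) - a ^ (-2:ℤ)) *
      (b * a * z (Fin.last N) - b⁻¹ * a⁻¹ * (z (Fin.last N))⁻¹) *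
      (∏ j : Fin (N + 1),
        (a * z j - a ^ (-3:ℤ) * (z j)⁻¹ * z (Fin.last N) ^ (-2:ℤ))) *
      (∏ j : Fin N,
        (a * (z (Fin.castSucc j))⁻¹ - a ^ (-3:ℤ) * z (Fin.castSucc j) * z (Fin.last N) ^ (-2:ℤ))) *
      (∏ j : Fin M,
        ((a * (z (Fin.last N))⁻¹ - a⁻¹ * z (Fin.last N) * w (Fin.castSucc j)) *
         (a * (z (Fin.last N))⁻¹ * w (Fin.castSucc j) - a⁻¹ * z (Fin.last N)))) *
      FBar a b M N (fun j => z (Fin.castSucc j)) (fun j => w (Fin.castSucc j)) x := by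
  have hx (k : Fin N) : x k ≤ M :=
    Nat.le_of_lt_succ ((hmono k.castSucc (Fin.last N) k.castSucc_lt_last).trans_eq hlast)
  rw [FBar_eq_dualWavefunction, FBar_eq_dualWavefunction]
  exact FBar_recursion_top_general ha hz hz4 hzz hzz' hx hlast
end

section
/- Suppose x̄_N ≠ M (that is, x̄_N < M). Then the following factorization holds: F̄_{M,N}(z_1,…,z_N|w_1,…,w_M|x̄_1,…,x̄_N) = ∏_{j=1}^N (az_j w_M−a⁻¹z_j⁻¹)(az_j⁻¹w_M−a⁻¹z_j) × F̄_{M−1,N}(z_1,…,z_N|w_1,…,w_{M−1}|x̄_1,…,x̄_N). -/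
open Finset

/-!
Put `ζ_k = z_{σ(k)}^{τ_{σ(k)}}`. In each summand the inhomogeneity `w_M` enters only through the
weights attached to the individual `ζ_k`. Since all particles sit strictly to the left of site
`M`, that site contributes to each of these weights the same factor
`(a ζ_k w_M - a⁻¹ ζ_k⁻¹) (a ζ_k⁻¹ w_M - a⁻¹ ζ_k)`, whatever the position of the particle. It is
invariant under `ζ_k ↦ ζ_k⁻¹`, so its product over `k` depends on neither `σ` nor `τ` and leaves
the sum.
-/

section Weights

variable {K : Type*} [Field K]

/-- The weight a particle with spectral parameter `ζ` at position `x` (counted from `1`) contributes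
to a summand of `FBar`, where `ζ` stands for `z_{σ(k)}^{τ_{σ(k)}}` and `w j` for `w_{j+1}`. -/
def particleWeight {M : ℕ} (a ζ : K) (w : Fin M → K) (x : ℕ) : K :=
  (∏ j, (a * ζ⁻¹ * w j - a⁻¹ * ζ)) *
  (∏ j : Fin M with j.val + 1 < x, (a * ζ⁻¹ - a⁻¹ * ζ * w j)) *
  ∏ j : Fin M with x ≤ j.val, (a * ζ * w j - a⁻¹ * ζ⁻¹)

/-- The factor of `particleWeight` coming from a site with inhomogeneity `u` to the right of the
particle. -/
def siteFactor (a ζ u : K) : K :=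
  (a * ζ * u - a⁻¹ * ζ⁻¹) * (a * ζ⁻¹ * u - a⁻¹ * ζ)

theorem siteFactor_inv (a ζ u : K) : siteFactor a ζ⁻¹ u = siteFactor a ζ u := by
  simp only [siteFactor, inv_inv, mul_comm]

theorem siteFactor_zpow_eps {N : ℕ} (a ζ u : K) (τ : Fin N → Bool) (j : Fin N) :
    siteFactor a (ζ ^ eps τ j) u = siteFactor a ζ u := by
  cases h : τ j <;> simp [eps, h, siteFactor_inv]

theorem prod_siteFactor_perm_zpow_eps {N : ℕ} (a u : K) (z : Fin N → K) (σ : Equiv.Perm (Fin N))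
    (τ : Fin N → Bool) :
    ∏ k, siteFactor a (z (σ k) ^ eps τ (σ k)) u = ∏ j, siteFactor a (z j) u := by
  simp only [siteFactor_zpow_eps]
  exact Equiv.prod_comp σ fun j => siteFactor a (z j) u

theorem prod_filter_val_castSucc {R : Type*} [CommMonoid R] {n : ℕ} (p : ℕ → Prop)
    [DecidablePred p] (f : Fin (n + 1) → R) :
    ∏ j : Fin (n + 1) with p j.val, f j =
      (∏ j : Fin n with p j.val, f j.castSucc) * if p n then f (Fin.last n) else 1 := by
  simp only [prod_filter, Fin.prod_univ_castSucc, Fin.val_castSucc, Fin.val_last]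

theorem particleWeight_castSucc {M x : ℕ} (hx : x ≤ M) (a ζ : K) (w : Fin (M + 1) → K) :
    particleWeight a ζ w x =
      siteFactor a ζ (w (Fin.last M)) * particleWeight a ζ (fun j => w j.castSucc) x := by
  have hlt : ¬ M + 1 < x := by omega
  simp only [particleWeight, siteFactor, Fin.prod_univ_castSucc,
    prod_filter_val_castSucc (fun i => i + 1 < x), prod_filter_val_castSucc (fun i => x ≤ i),
    if_neg hlt, if_pos hx]
  ring

theorem prod_particleWeight_castSucc {M N : ℕ} {x : Fin N → ℕ} (hx : ∀ k, x k ≤ M) (a : K)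
    (z : Fin N → K) (w : Fin (M + 1) → K) (σ : Equiv.Perm (Fin N)) (τ : Fin N → Bool) :
    ∏ k, particleWeight a (z (σ k) ^ eps τ (σ k)) w (x k) =
      (∏ j, siteFactor a (z j) (w (Fin.last M))) *
        ∏ k, particleWeight a (z (σ k) ^ eps τ (σ k)) (fun j => w j.castSucc) (x k) := by
  simp only [particleWeight_castSucc (hx _), prod_mul_distrib, prod_siteFactor_perm_zpow_eps]

end Weights

/-- The part of the `(σ, τ)`-summand of `FBar` that involves neither the inhomogeneities nor the
positions, with the normalization in front of the sum absorbed into it. -/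
noncomputable def FBarCoeff (a b : ℂ) {N : ℕ} (z : Fin N → ℂ) (σ : Equiv.Perm (Fin N))
    (τ : Fin N → Bool) : ℂ :=
  (a ^ (2 : ℤ) - a ^ (-2 : ℤ)) ^ N *
  (∏ j, (-(a ^ (2 : ℤ) * z j ^ (2 : ℤ)) + a ^ (-2 : ℤ) * z j ^ (-2 : ℤ))) *
  (∏ j, (z j ^ (2 * eps τ j) - z j ^ (-(2 * eps τ j)))⁻¹) *
  (∏ p : Fin N × Fin N with p.1 < p.2,
    pairFactor a (z (σ p.1)) (z (σ p.2)) (eps τ (σ p.1)) (eps τ (σ p.2))) *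
  ∏ k, (b * a * z (σ k) ^ eps τ (σ k) - b⁻¹ * a⁻¹ * z (σ k) ^ (-eps τ (σ k)))

theorem FBar_eq_sum_particleWeight (a b : ℂ) (M N : ℕ) (z : Fin N → ℂ) (w : Fin M → ℂ)
    (x : ℕ → ℕ) :
    FBar a b M N z w x = ∑ σ : Equiv.Perm (Fin N), ∑ τ : Fin N → Bool,
      FBarCoeff a b z σ τ * ∏ k : Fin N, particleWeight a (z (σ k) ^ eps τ (σ k)) w (x k) := by
  simp only [FBar, FBarCoeff, particleWeight, prod_mul_distrib, mul_sum, mul_assoc, zpow_neg]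

theorem FBar_factorization_general (a b : ℂ) (M N : ℕ)
    (z : Fin N → ℂ) (w : Fin (M + 1) → ℂ) (x : ℕ → ℕ)
    (_ha : a ≠ 0) (_hb : b ≠ 0) (_hz : ∀ j, z j ≠ 0) (_hz4 : ∀ j, z j ^ 4 ≠ 1)
    (_hzz : ∀ j k, j ≠ k → z j ^ 2 * z k ^ 2 ≠ 1)
    (_hzz' : ∀ j k, j ≠ k → z j ^ 2 ≠ z k ^ 2)
    (hx : ∀ k : Fin N, x k ≤ M) :
    FBar a b (M + 1) N z w x
    = (∏ j : Fin N,
        ((a * z j * w (Fin.last M) - a⁻¹ * (z j)⁻¹) *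
         (a * (z j)⁻¹ * w (Fin.last M) - a⁻¹ * z j))) *
      FBar a b M N z (fun j => w (Fin.castSucc j)) x := by
  change _ = (∏ j, siteFactor a (z j) (w (Fin.last M))) * _
  simp only [FBar_eq_sum_particleWeight, prod_particleWeight_castSucc hx, mul_sum, mul_left_comm]

/-- Property (4), second case, for the dual `F̄`: when `x̄_N ≠ M` (i.e. `x̄_N < M`;
sizes re-parametrized as `M+1` sites and `N+1` particles, so the condition reads
`x N ≤ M`), the `w_M`-dependence factors out of `F̄_{M,N}`. -/
theorem FBar_factorization (a b : ℂ) (M N : ℕ)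
    (z : Fin (N + 1) → ℂ) (w : Fin (M + 1) → ℂ) (x : ℕ → ℕ)
    (ha : a ≠ 0) (hb : b ≠ 0) (hz : ∀ j, z j ≠ 0) (hz4 : ∀ j, z j ^ 4 ≠ 1)
    (hzz : ∀ j k, j ≠ k → z j ^ 2 * z k ^ 2 ≠ 1)
    (hzz' : ∀ j k, j ≠ k → z j ^ 2 ≠ z k ^ 2)
    (hx1 : ∀ k : Fin (N + 1), 1 ≤ x k.val) (hxM : ∀ k : Fin (N + 1), x k.val ≤ M + 1)
    (hmono : ∀ j k : Fin (N + 1), j < k → x j.val < x k.val)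
    (hlast : x N ≤ M) :
    FBar a b (M + 1) (N + 1) z w x
    = (∏ j : Fin (N + 1),
        ((a * z j * w (Fin.last M) - a⁻¹ * (z j)⁻¹) *
         (a * (z j)⁻¹ * w (Fin.last M) - a⁻¹ * z j))) *
      FBar a b M (N + 1) z (fun j => w (Fin.castSucc j)) x := by
  have hx : StrictMono fun k : Fin (N + 1) => x k := hmono
  exact FBar_factorization_general a b M (N + 1) z w x ha hb hz hz4 hzz hzz'
    fun k => (hx.monotone k.le_last).trans hlast
end
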